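/- In the semilinear setting below, let M be a W₀-lattice in V with pM ⊆ M^∨ ⊆ M, with M/M^∨ of length 2 as a W₀-module, and with Φ_*(M) = M. Let L be a self-dual W₀-lattice with M^∨ ⊆ L ⊆ M and Φ_*(L) ≠ L. Then Φ_*(L) is again a self-dual W₀-lattice with M^∨ ⊆ Φ_*(L) ⊆ M, and Φ_*(Φ_*(L)) = L. -/

import Mathlib

/-!
Statement 9: In the semilinear setting (`W₀ = W(𝔽)`, `K₀ = Frac W₀`, `σ` the automorphism of
`K₀` induced by the Witt vector Frobenius, `Φ : V → V` a `σ`-semilinear bijection with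
`Q (Φ v) = σ (Q v)`), let `M` be a `W₀`-lattice with `pM ⊆ M^∨ ⊆ M`, with `M/M^∨` of length 2,
and with `Φ_* M = M`.  Let `L` be a self-dual lattice with `M^∨ ⊆ L ⊆ M` and `Φ_* L ≠ L`.
Then `Φ_* L` is again self-dual with `M^∨ ⊆ Φ_* L ⊆ M`, and `Φ_* (Φ_* L) = L`.
-/

open QuadraticMap

variable (p : ℕ) [Fact p.Prime] (𝔽 : Type*) [Field 𝔽] [CharP 𝔽 p] [IsAlgClosed 𝔽]
variable {V : Type*} [AddCommGroup V]
  [Module (FractionRing (WittVector p 𝔽)) V]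
  [Module (WittVector p 𝔽) V]
  [IsScalarTower (WittVector p 𝔽) (FractionRing (WittVector p 𝔽)) V]

/-- `L` is a `W₀`-lattice in the `K₀`-vector space `V`:
a finitely generated `W₀`-submodule spanning `V` over `K₀`. -/
def IsLattice (L : Submodule (WittVector p 𝔽) V) : Prop :=
  L.FG ∧ Submodule.span (FractionRing (WittVector p 𝔽)) (L : Set V) = ⊤

/-- The dual lattice `L^∨ = {x ∈ V : [x, y] ∈ W₀ for all y ∈ L}` with respect to the bilinear
form `[x, y] = Q (x + y) - Q x - Q y` associated to `Q`. -/
noncomputable def dualLattice (Q : QuadraticForm (FractionRing (WittVector p 𝔽)) V)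
    (L : Submodule (WittVector p 𝔽) V) : Submodule (WittVector p 𝔽) V :=
  LinearMap.BilinForm.dualSubmodule (QuadraticMap.polarBilin Q) L

/-- There is a saturated chain (each step a covering in the lattice of `W₀`-submodules) of
length `k` from `A` to `B`.  For `A ≤ B` this says exactly that the `W₀`-module `B/A` has
length `k`. -/
def chainLength (A B : Submodule (WittVector p 𝔽) V) (k : ℕ) : Prop :=
  ∃ f : Fin (k + 1) → Submodule (WittVector p 𝔽) V,
    f 0 = A ∧ f (Fin.last k) = B ∧ ∀ i : Fin k, f i.castSucc ⋖ f i.succ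

/-- `Φ_* L`: the `W₀`-span of the image of `L` under `Φ`. -/
noncomputable def phiStar (Φ : V ≃+ V) (L : Submodule (WittVector p 𝔽) V) :
    Submodule (WittVector p 𝔽) V :=
  Submodule.span (WittVector p 𝔽) (⇑Φ '' (L : Set V))

/-!
If `A ≠ B` are self-dual with `M^∨ ⊆ A, B ⊆ M`, then `A + B = M` because `M / M^∨` has length two.
Let `C` be a third such submodule and write `c ∈ C` as `c = a + b`. The pairings `[a, a]`, `[b, b]`
and `[c, c]` are integral, hence so is `2 [a, b]`, hence `[a, b]`, as `2` is a unit. If `b ∉ M^∨`,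
then `B = M^∨ + W₀ b`, so `a` pairs integrally with `B` and lies in `B^∨ = B`. Thus `C ⊆ A ∪ B`, so
`C` is contained in one of `A` and `B`, and equals it by self-duality. Since `Φ_*` commutes with
duality and fixes `M`, it acts injectively on this set of at most two submodules, so it exchanges
`L` and `Φ_* L`.
-/

section ModularLattice

variable {α : Type*} [Lattice α] [IsModularLattice α] {d n m a : α}

theorem covBy_and_covBy_of_covBy_of_covBy (hdn : d ⋖ n) (hnm : n ⋖ m) (hda : d < a) (ham : a < m) :
    d ⋖ a ∧ a ⋖ m := by
  rcases eq_or_ne a n with rfl | hne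
  · exact ⟨hdn, hnm⟩
  have not_le : ¬a ≤ n := fun han => hne ((hdn.eq_or_eq hda.le han).resolve_left hda.ne')
  have not_ge : ¬n ≤ a := fun hna => hne ((hnm.eq_or_eq hna ham.le).resolve_right ham.ne)
  have sup_eq : n ⊔ a = m :=
    (hnm.eq_or_eq le_sup_left (sup_le hnm.le ham.le)).resolve_left (mt sup_eq_left.1 not_le)
  have inf_eq : n ⊓ a = d :=
    (hdn.eq_or_eq (le_inf hdn.le hda.le) inf_le_left).resolve_right (mt inf_eq_left.1 not_ge)
  constructor
  · rw [← inf_eq]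
    exact inf_covBy_of_covBy_sup_left (sup_eq.symm ▸ hnm)
  · rw [← sup_eq]
    exact covBy_sup_of_inf_covBy_left (inf_eq.symm ▸ hdn)

end ModularLattice

theorem sup_span_singleton_eq_of_covBy {R E : Type*} [Semiring R] [AddCommMonoid E] [Module R E]
    {D N : Submodule R E} (hDN : D ⋖ N) {x : E} (hxN : x ∈ N) (hxD : x ∉ D) :
    D ⊔ Submodule.span R {x} = N := by
  have hxle : Submodule.span R {x} ≤ N := (Submodule.span_singleton_le_iff_mem x N).2 hxN
  refine (hDN.eq_or_eq le_sup_left (sup_le hDN.le hxle)).resolve_left fun h => hxD ?_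
  rwa [sup_eq_left, Submodule.span_singleton_le_iff_mem] at h

theorem apply_mem_one_of_apply_self_mem_one {R K E : Type*} [CommRing R] [CommRing K] [Algebra R K]
    [AddCommGroup E] [Module K E] {B : LinearMap.BilinForm K E} (h2 : IsUnit (2 : R))
    (hB : B.IsSymm) {x y : E}
    (hx : B x x ∈ (1 : Submodule R K)) (hy : B y y ∈ (1 : Submodule R K))
    (hxy : B (x + y) (x + y) ∈ (1 : Submodule R K)) : B x y ∈ (1 : Submodule R K) := by
  have polarization : (2 : R) • B x y = B (x + y) (x + y) - B x x - B y y := by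
    rw [LinearMap.BilinForm.add_left, LinearMap.BilinForm.add_right, LinearMap.BilinForm.add_right,
      hB.eq y x, two_smul]
    ring
  rw [← Submodule.smul_mem_iff_of_isUnit _ h2, polarization]
  exact sub_mem (sub_mem hxy hx) hy

section DualSubmodule

variable {R K E : Type*} [CommRing R] [Field K] [Algebra R K]
  [AddCommGroup E] [Module R E] [Module K E] [IsScalarTower R K E]
  {B : LinearMap.BilinForm K E}

theorem dualSubmodule_anti (B : LinearMap.BilinForm K E) {L M : Submodule R E} (h : L ≤ M) :
    B.dualSubmodule M ≤ B.dualSubmodule L :=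
  fun _ hx y hy => hx y (h hy)

theorem le_dualSubmodule_dualSubmodule (hB : B.IsSymm) (M : Submodule R E) :
    M ≤ B.dualSubmodule (B.dualSubmodule M) :=
  fun x hx y hy => hB.eq y x ▸ hy x hx

theorem eq_of_le_of_dualSubmodule_eq {L M : Submodule R E} (hL : B.dualSubmodule L = L)
    (hM : B.dualSubmodule M = M) (h : L ≤ M) : L = M := by
  refine le_antisymm h ?_
  calc
    M = B.dualSubmodule M := hM.symm
    _ ≤ B.dualSubmodule L := dualSubmodule_anti B h
    _ = L := hL

theorem dualSubmodule_covBy_and_covBy (hB : B.IsSymm) {L N M : Submodule R E}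
    (hDN : B.dualSubmodule M ⋖ N) (hNM : N ⋖ M) (hL : B.dualSubmodule L = L) (hLM : L ≤ M) :
    B.dualSubmodule M ⋖ L ∧ L ⋖ M := by
  have hDM : B.dualSubmodule M ≠ M := (hDN.lt.trans hNM.lt).ne
  have hne : L ≠ M := by
    rintro rfl
    exact hDM hL
  have hDL : B.dualSubmodule M ≤ L := hL ▸ dualSubmodule_anti B hLM
  have hDne : B.dualSubmodule M ≠ L := by
    intro h
    refine hne (le_antisymm hLM ?_)
    calc
      M ≤ B.dualSubmodule (B.dualSubmodule M) := le_dualSubmodule_dualSubmodule hB M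
      _ = L := by rw [h, hL]
  exact covBy_and_covBy_of_covBy_of_covBy hDN hNM (hDL.lt_of_ne hDne) (hLM.lt_of_ne hne)

theorem mem_dualSubmodule_sup_span_singleton {D : Submodule R E} {x y : E}
    (hx : x ∈ B.dualSubmodule D) (hxy : B x y ∈ (1 : Submodule R K)) :
    x ∈ B.dualSubmodule (D ⊔ Submodule.span R {y}) := by
  intro z hz
  obtain ⟨d, hd, _, hw, rfl⟩ := Submodule.mem_sup.1 hz
  obtain ⟨r, rfl⟩ := Submodule.mem_span_singleton.1 hw
  rw [map_add, LinearMap.map_smul_of_tower]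
  exact add_mem (hx d hd) (Submodule.smul_mem _ r hxy)

theorem eq_or_eq_of_dualSubmodule_eq (h2 : IsUnit (2 : R)) (hB : B.IsSymm)
    {N M L₁ L₂ L₃ : Submodule R E} (hDN : B.dualSubmodule M ⋖ N) (hNM : N ⋖ M)
    (hL₁ : B.dualSubmodule L₁ = L₁) (hL₁M : L₁ ≤ M) (hL₂ : B.dualSubmodule L₂ = L₂) (hL₂M : L₂ ≤ M)
    (hL₃ : B.dualSubmodule L₃ = L₃) (hL₃M : L₃ ≤ M) (hne : L₁ ≠ L₂) :
    L₃ = L₁ ∨ L₃ = L₂ := by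
  obtain ⟨hDL₁, hL₁cov⟩ := dualSubmodule_covBy_and_covBy hB hDN hNM hL₁ hL₁M
  obtain ⟨hDL₂, hL₂cov⟩ := dualSubmodule_covBy_and_covBy hB hDN hNM hL₂ hL₂M
  have hsup : L₁ ⊔ L₂ = M := hL₁cov.wcovBy.sup_eq hL₂cov.wcovBy hne
  have self_mem {L : Submodule R E} (hL : B.dualSubmodule L = L) {x : E} (hx : x ∈ L) :
      B x x ∈ (1 : Submodule R K) := hL.ge hx x hx
  have hunion : (L₃ : Set E) ⊆ L₁ ∪ L₂ := by
    intro c hc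
    obtain ⟨a, ha, b, hb, rfl⟩ := Submodule.mem_sup.1 (hsup.ge (hL₃M hc))
    by_cases hbD : b ∈ B.dualSubmodule M
    · exact Or.inl (L₁.add_mem ha (hDL₁.le hbD))
    · have hab : B a b ∈ (1 : Submodule R K) := apply_mem_one_of_apply_self_mem_one h2 hB
        (self_mem hL₁ ha) (self_mem hL₂ hb) (self_mem hL₃ hc)
      have haL₂ : a ∈ B.dualSubmodule L₂ := by
        rw [← sup_span_singleton_eq_of_covBy hDL₂ hb hbD]
        exact mem_dualSubmodule_sup_span_singleton
          (le_dualSubmodule_dualSubmodule hB M (hL₁M ha)) hab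
      exact Or.inr (L₂.add_mem (hL₂.le haL₂) hb)
  exact (AddSubgroupClass.subset_union.1 hunion).imp
    (eq_of_le_of_dualSubmodule_eq hL₃ hL₁) (eq_of_le_of_dualSubmodule_eq hL₃ hL₂)

end DualSubmodule

section Semilinear

variable {R R' K K' E E' : Type*} [CommRing R] [CommRing R'] [Field K] [Field K']
  [Algebra R K] [Algebra R' K']
  [AddCommGroup E] [Module R E] [Module K E] [IsScalarTower R K E]
  [AddCommGroup E'] [Module R' E'] [Module K' E'] [IsScalarTower R' K' E']

/-- An additive map that is semilinear over `K` along `σ`, regarded as a semilinear map over `R`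
along `τ`, where `σ` extends `τ`. -/
def restrictScalarsSemilinear {F : Type*} [FunLike F E E'] [AddMonoidHomClass F E E']
    {τ : R →+* R'} {σ : K → K'} (hστ : ∀ r, σ (algebraMap R K r) = algebraMap R' K' (τ r)) (Φ : F)
    (hΦ : ∀ (a : K) (v : E), Φ (a • v) = σ a • Φ v) : E →ₛₗ[τ] E' where
  toFun := Φ
  map_add' := map_add Φ
  map_smul' r v := by rw [← algebraMap_smul K r v, hΦ, hστ, algebraMap_smul]

theorem dualSubmodule_map {τ : R →+* R'} [RingHomSurjective τ] {B : LinearMap.BilinForm K E}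
    {B' : LinearMap.BilinForm K' E'} {Φ : E →ₛₗ[τ] E'} (hΦ : Function.Bijective Φ)
    (hΦB : ∀ x y, B' (Φ x) (Φ y) ∈ (1 : Submodule R' K') ↔ B x y ∈ (1 : Submodule R K))
    (L : Submodule R E) : B'.dualSubmodule (L.map Φ) = (B.dualSubmodule L).map Φ := by
  ext x
  obtain ⟨x, rfl⟩ := hΦ.surjective x
  simp only [LinearMap.BilinForm.mem_dualSubmodule, Submodule.mem_map, hΦ.injective.eq_iff,
    exists_eq_right, forall_exists_index, and_imp, forall_apply_eq_imp_iff₂, hΦB]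

theorem map_map_eq_of_dualSubmodule_eq_of_map_ne (h2 : IsUnit (2 : R)) {B : LinearMap.BilinForm K E}
    (hB : B.IsSymm) {τ : R →+* R} [RingHomSurjective τ] {Φ : E →ₛₗ[τ] E}
    (hΦ : Function.Bijective Φ)
    (hΦB : ∀ x y, B (Φ x) (Φ y) ∈ (1 : Submodule R K) ↔ B x y ∈ (1 : Submodule R K))
    {M N L : Submodule R E} (hDN : B.dualSubmodule M ⋖ N) (hNM : N ⋖ M) (hMΦ : M.map Φ = M)
    (hL : B.dualSubmodule L = L) (hLM : L ≤ M) (hLΦ : L.map Φ ≠ L) :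
    (L.map Φ).map Φ = L := by
  have map_selfDual {A : Submodule R E} (hA : B.dualSubmodule A = A) :
      B.dualSubmodule (A.map Φ) = A.map Φ := by rw [dualSubmodule_map hΦ hΦB, hA]
  have map_le {A : Submodule R E} (hA : A ≤ M) : A.map Φ ≤ M := hMΦ ▸ Submodule.map_mono hA
  have hmap_ne : (L.map Φ).map Φ ≠ L.map Φ :=
    (Submodule.map_injective_of_injective hΦ.injective).ne hLΦ
  exact (eq_or_eq_of_dualSubmodule_eq h2 hB hDN hNM hL hLM (map_selfDual hL) (map_le hLM)
    (map_selfDual (map_selfDual hL)) (map_le (map_le hLM)) hLΦ.symm).resolve_right hmap_ne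

end Semilinear

theorem ringEquiv_apply_mem_one_iff {R R' K K' : Type*} [CommRing R] [CommRing R'] [CommRing K]
    [CommRing K'] [Algebra R K] [Algebra R' K'] {τ : R ≃+* R'} {σ : K ≃+* K'}
    (hστ : ∀ r, σ (algebraMap R K r) = algebraMap R' K' (τ r)) {a : K} :
    σ a ∈ (1 : Submodule R' K') ↔ a ∈ (1 : Submodule R K) := by
  simp only [Submodule.mem_one, τ.surjective.exists, ← hστ, EmbeddingLike.apply_eq_iff_eq]

theorem polar_map {E E' K K' F G : Type*} [AddCommGroup E] [AddCommGroup E'] [AddCommGroup K]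
    [AddCommGroup K'] [FunLike F E E'] [AddMonoidHomClass F E E'] [FunLike G K K']
    [AddMonoidHomClass G K K'] {f : E → K} {f' : E' → K'} {Φ : F} {σ : G}
    (h : ∀ v, f' (Φ v) = σ (f v)) (x y : E) : polar f' (Φ x) (Φ y) = σ (polar f x y) := by
  simp only [polar, ← map_add Φ, h, map_sub]

theorem statement_9_general {R K E : Type*} [CommRing R] [Field K] [Algebra R K]
    [AddCommGroup E] [Module R E] [Module K E] [IsScalarTower R K E] (h2 : IsUnit (2 : R))
    (τ : R ≃+* R) (σ : K ≃+* K) (hστ : ∀ r, σ (algebraMap R K r) = algebraMap R K (τ r))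
    (B : LinearMap.BilinForm K E) (hB : B.IsSymm)
    (Φ : E ≃+ E) (hΦsemi : ∀ (a : K) (v : E), Φ (a • v) = σ a • Φ v)
    (hΦB : ∀ x y, B (Φ x) (Φ y) = σ (B x y))
    (M N L : Submodule R E) (hDN : B.dualSubmodule M ⋖ N) (hNM : N ⋖ M)
    (hMΦ : Submodule.span R (Φ '' M) = M)
    (hL : B.dualSubmodule L = L) (hLM : L ≤ M) (hLΦ : Submodule.span R (Φ '' L) ≠ L) :
    B.dualSubmodule (Submodule.span R (Φ '' L)) = Submodule.span R (Φ '' L) ∧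
    B.dualSubmodule M ≤ Submodule.span R (Φ '' L) ∧ Submodule.span R (Φ '' L) ≤ M ∧
    Submodule.span R (Φ '' (Submodule.span R (Φ '' L) : Submodule R E)) = L := by
  let Ψ : E →ₛₗ[(τ : R →+* R)] E := restrictScalarsSemilinear hστ Φ hΦsemi
  have hspan (A : Submodule R E) : Submodule.span R (Φ '' A) = A.map Ψ :=
    Submodule.span_eq (A.map Ψ)
  have hΨ : Function.Bijective Ψ := Φ.bijective
  have hΨB (x y : E) : B (Ψ x) (Ψ y) ∈ (1 : Submodule R K) ↔ B x y ∈ (1 : Submodule R K) :=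
    hΦB x y ▸ ringEquiv_apply_mem_one_iff hστ
  simp only [hspan] at hMΦ hLΦ ⊢
  have hL' : B.dualSubmodule (L.map Ψ) = L.map Ψ := by rw [dualSubmodule_map hΨ hΨB, hL]
  have hL'M : L.map Ψ ≤ M := hMΦ ▸ Submodule.map_mono hLM
  exact ⟨hL', hL' ▸ dualSubmodule_anti B hL'M, hL'M,
    map_map_eq_of_dualSubmodule_eq_of_map_ne h2 hB hΨ hΨB hDN hNM hMΦ hL hLM hLΦ⟩

section WittVector

variable {p} {k : Type*}

theorem wittVector_isUnit_two [Field k] [CharP k p] (hp : p ≠ 2) :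
    IsUnit (2 : WittVector p k) := by
  have hdvd : ¬p ∣ 2 := fun h => hp ((Nat.prime_dvd_prime_iff_eq Fact.out Nat.prime_two).1 h)
  apply WittVector.isUnit_of_coeff_zero_ne_zero
  rw [← WittVector.constantCoeff_apply, map_ofNat]
  exact ((CharP.isUnit_ofNat_iff (R := k) Fact.out).2 hdvd).ne_zero

theorem fractionRing_frobenius_algebraMap [CommRing k] [IsDomain k] [CharP k p] [PerfectRing k p]
    (w : WittVector p k) :
    WittVector.FractionRing.frobenius p k (algebraMap _ _ w) =
      algebraMap _ _ (WittVector.frobeniusEquiv p k w) :=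
  IsFractionRing.ringEquivOfRingEquiv_algebraMap _ _

theorem exists_covBy_covBy_of_chainLength_two [Field k] {E : Type*} [AddCommGroup E]
    [Module (WittVector p k) E] {A B : Submodule (WittVector p k) E} (h : chainLength p k A B 2) :
    ∃ N, A ⋖ N ∧ N ⋖ B := by
  obtain ⟨f, rfl, rfl, hf⟩ := h
  exact ⟨f 1, hf 0, hf 1⟩

end WittVector

theorem statement_9 (hp : p ≠ 2) [FiniteDimensional (FractionRing (WittVector p 𝔽)) V]
    (Q : QuadraticForm (FractionRing (WittVector p 𝔽)) V)
    (hQ : LinearMap.SeparatingLeft (QuadraticMap.polarBilin Q))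
    (Φ : V ≃+ V)
    (hΦsemi : ∀ (a : FractionRing (WittVector p 𝔽)) (v : V),
      Φ (a • v) = WittVector.FractionRing.frobenius p 𝔽 a • Φ v)
    (hΦQ : ∀ v : V, Q (Φ v) = WittVector.FractionRing.frobenius p 𝔽 (Q v))
    (M : Submodule (WittVector p 𝔽) V) (hM : IsLattice p 𝔽 M)
    (hMp : ∀ x ∈ M, (p : WittVector p 𝔽) • x ∈ dualLattice p 𝔽 Q M)
    (hMdual : dualLattice p 𝔽 Q M ≤ M)
    (hlen : chainLength p 𝔽 (dualLattice p 𝔽 Q M) M 2)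
    (hMΦ : phiStar p 𝔽 Φ M = M)
    (L : Submodule (WittVector p 𝔽) V)
    (hLsd : dualLattice p 𝔽 Q L = L)
    (hL₁ : dualLattice p 𝔽 Q M ≤ L) (hL₂ : L ≤ M)
    (hLΦ : phiStar p 𝔽 Φ L ≠ L) :
    dualLattice p 𝔽 Q (phiStar p 𝔽 Φ L) = phiStar p 𝔽 Φ L ∧
    dualLattice p 𝔽 Q M ≤ phiStar p 𝔽 Φ L ∧ phiStar p 𝔽 Φ L ≤ M ∧
    phiStar p 𝔽 Φ (phiStar p 𝔽 Φ L) = L := by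
  obtain ⟨N, hDN, hNM⟩ := exists_covBy_covBy_of_chainLength_two hlen
  exact statement_9_general (wittVector_isUnit_two hp) _ _ fractionRing_frobenius_algebraMap
    _ ⟨polar_comm Q⟩ Φ hΦsemi (polar_map hΦQ) M N L hDN hNM hMΦ hLsd hL₂ hLΦ
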